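/- arXiv:2601.15258 — 2 statements merged into one kernel-verified Lean document; each statement's English description precedes it below -/
import Mathlib

section
/- In the max-variant, for every k ≥ 3 facilities, the mechanism M_k^max has approximation ratio at most 2(k+1): on every instance with m ≥ k groups, its output has social cost at most 2(k+1) times the minimum social cost over all feasible solutions. -/
open Finset

noncomputable section

/-- A distributed facility location setting for `k` facilities and `m` groups:
`n ≥ 2` agents on the real line, partitioned into `m ≥ k` disjoint nonempty groups. -/
structure FLSetting (k m : ℕ) where
  n : ℕ
  hn : 2 ≤ n
  hmk : k ≤ m
  grp : Fin n → Fin m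
  surj : Function.Surjective grp

/-- A two-phase mechanism for `k` facilities: for each number `m` of groups, a
representative function on finite multisets of reals, and a selection function
producing the `k` facility locations from the multiset of representatives. -/
structure TwoPhase (k : ℕ) where
  rep : ℕ → Multiset ℝ → ℝ
  sel : ℕ → Multiset ℝ → Fin k → ℝ

/-- Validity of a two-phase mechanism: the representative of a nonempty multiset
is one of its elements, and the selected facility locations form a sub-multiset
of the representatives. -/
def TwoPhase.Valid {k : ℕ} (M : TwoPhase k) : Prop :=
  (∀ (m : ℕ) (S : Multiset ℝ), S ≠ 0 → M.rep m S ∈ S) ∧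
  (∀ (m : ℕ) (R : Multiset ℝ), Multiset.card R = m → k ≤ m →
    (↑(List.ofFn (M.sel m R)) : Multiset ℝ) ≤ R)

/-- The multiset of (reported) positions of the agents in group `j`. -/
def groupMS {k m : ℕ} (S : FLSetting k m) (x : Fin S.n → ℝ) (j : Fin m) : Multiset ℝ :=
  (Finset.univ.filter (fun i => S.grp i = j)).val.map x

/-- The number of agents in group `j`. -/
def groupSize {k m : ℕ} (S : FLSetting k m) (j : Fin m) : ℕ :=
  (Finset.univ.filter (fun i => S.grp i = j)).card

/-- The multiset of the `m` group representatives. -/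
def repsMS {k m : ℕ} (M : TwoPhase k) (S : FLSetting k m) (x : Fin S.n → ℝ) : Multiset ℝ :=
  (Finset.univ.val.map fun j : Fin m => M.rep m (groupMS S x j))

/-- The facility locations output by mechanism `M` on reported positions `x`. -/
def outcome {k m : ℕ} (M : TwoPhase k) (S : FLSetting k m) (x : Fin S.n → ℝ) : Fin k → ℝ :=
  M.sel m (repsMS M S x)

/-- Sum-variant individual cost: total distance to all facilities. -/
def sumCost (k : ℕ) (xi : ℝ) (y : Fin k → ℝ) : ℝ := ∑ ℓ, |xi - y ℓ|

/-- Max-variant individual cost: distance to the farthest facility. -/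
def maxCost (k : ℕ) (xi : ℝ) (y : Fin k → ℝ) : ℝ := ⨆ ℓ, |xi - y ℓ|

/-- Social cost: average over groups of the average individual cost within the group. -/
def SC {k m : ℕ} (cost : ℝ → (Fin k → ℝ) → ℝ) (S : FLSetting k m) (x : Fin S.n → ℝ)
    (y : Fin k → ℝ) : ℝ :=
  (1 / (m : ℝ)) * ∑ j : Fin m,
    (1 / (groupSize S j : ℝ)) *
      ∑ i ∈ Finset.univ.filter (fun i => S.grp i = j), cost (x i) y

/-- A feasible solution opens the `k` facilities at the positions of `k` distinct agents. -/
def Feasible {k m : ℕ} (S : FLSetting k m) (x : Fin S.n → ℝ) (y : Fin k → ℝ) : Prop :=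
  ∃ f : Fin k → Fin S.n, Function.Injective f ∧ ∀ ℓ, y ℓ = x (f ℓ)

/-- Strategyproofness with respect to an individual cost function. -/
def Strategyproof {k : ℕ} (cost : ℝ → (Fin k → ℝ) → ℝ) (M : TwoPhase k) : Prop :=
  ∀ (m : ℕ) (S : FLSetting k m) (x : Fin S.n → ℝ) (i : Fin S.n) (x' : ℝ),
    cost (x i) (outcome M S x) ≤ cost (x i) (outcome M S (Function.update x i x'))

/-- Strategyproofness restricted to instances with exactly `m` groups. -/
def StrategyproofOn {k : ℕ} (cost : ℝ → (Fin k → ℝ) → ℝ) (M : TwoPhase k) (m : ℕ) : Prop :=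
  ∀ (S : FLSetting k m) (x : Fin S.n → ℝ) (i : Fin S.n) (x' : ℝ),
    cost (x i) (outcome M S x) ≤ cost (x i) (outcome M S (Function.update x i x'))

/-- The `t`-th leftmost element of a multiset of reals (1-indexed). -/
def kthLeftmost (S : Multiset ℝ) (t : ℕ) : ℝ := (S.sort (· ≤ ·)).getD (t - 1) 0

/-- The mechanism `M_m(θ, ℓ, r)` for two facilities: each group's representative is the
position of its `⌈θ·n_g⌉`-th leftmost agent, and the facilities are opened at the
`⌈ℓm⌉`-th and `⌈rm⌉`-th leftmost representative locations. -/
def Mmech (θ l r : ℝ) : TwoPhase 2 where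
  rep := fun _ S => kthLeftmost S ⌈θ * (Multiset.card S : ℝ)⌉₊
  sel := fun m R => ![kthLeftmost R ⌈l * (m : ℝ)⌉₊, kthLeftmost R ⌈r * (m : ℝ)⌉₊]


/-- The mechanism `M_k^max`: each group's representative is the position of its
`⌈n_g/2⌉`-th leftmost agent, and for each `ℓ ∈ {1,…,k}` the `ℓ`-th facility is opened
at the `(⌈m/2⌉ + ℓ − ⌈k/2⌉)`-th leftmost representative location. -/
def MmaxMech (k : ℕ) : TwoPhase k where
  rep := fun _ S => kthLeftmost S ((Multiset.card S + 1) / 2)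
  sel := fun m R ℓ => kthLeftmost R ((m + 1) / 2 + (ℓ.val + 1) - (k + 1) / 2)

/-!
An agent of group `g` gets weight `1 / n_g`, so that the social cost is a weighted average over all
agents, of total weight `m`. At least `⌊(m - k) / 2⌋ + 1` representatives lie weakly on each side of
every facility opened by the mechanism, and each of them, being the median of its group, has half of
the weight of the group on that same side. So agents of weight at least
`d = (⌊(m - k) / 2⌋ + 1) / 2` lie weakly left of the leftmost facility `a`, and likewise right of
the rightmost facility `b`. To reach any point `c`, those agents pay in total at least `d` times the
length of the hull of `a`, `b` and `c`. This length bounds what an agent loses by paying for the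
farther of `a` and `b` instead of `c`, and the agents that are charged for the hull lose that much
less. Hence the mechanism is within a factor `m / d ≤ 2 (k + 1)` of opening all facilities at a
single point `c`; taking for `c` one facility of a solution compares it with that solution.
-/

lemma succ_le_countP_le_getElem {α : Type*} [Preorder α] [DecidableLE α] {l : List α}
    (hl : l.SortedLE) {i : ℕ} (hi : i < l.length) : i + 1 ≤ l.countP (· ≤ l[i]) := by
  have htake : ∀ z ∈ l.take (i + 1), decide (z ≤ l[i]) := fun z hz => by
    obtain ⟨j, hj, rfl⟩ := List.mem_take_iff_getElem.1 hz
    exact decide_eq_true (hl.getElem_le_getElem_of_le (by omega))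
  calc i + 1 = (l.take (i + 1)).countP (· ≤ l[i]) := by
        rw [List.countP_eq_length.2 htake, List.length_take_of_le hi]
    _ ≤ l.countP (· ≤ l[i]) := (List.take_sublist _ _).countP_le

lemma length_sub_le_countP_getElem_le {α : Type*} [Preorder α] [DecidableLE α] {l : List α}
    (hl : l.SortedLE) {i : ℕ} (hi : i < l.length) : l.length - i ≤ l.countP (l[i] ≤ ·) := by
  have hdrop : ∀ z ∈ l.drop i, decide (l[i] ≤ z) := fun z hz => by
    obtain ⟨j, hj, rfl⟩ := List.mem_drop_iff_getElem.1 hz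
    exact decide_eq_true (hl.getElem_le_getElem_of_le (by omega))
  calc l.length - i = (l.drop i).countP (l[i] ≤ ·) := by
        rw [List.countP_eq_length.2 hdrop, List.length_drop]
    _ ≤ l.countP (l[i] ≤ ·) := (List.drop_sublist _ _).countP_le

lemma countP_le_countP_of_imp {α : Type*} (A : Multiset α) {p q : α → Prop} [DecidablePred p]
    [DecidablePred q] (h : ∀ z, p z → q z) : A.countP p ≤ A.countP q := by
  simpa only [Multiset.countP_eq_card_filter] using
    Multiset.card_le_card (A.monotone_filter_right h)

lemma countP_sort {α : Type*} [LinearOrder α] (A : Multiset α) (p : α → Prop) [DecidablePred p] :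
    (A.sort (· ≤ ·)).countP p = A.countP p := by
  rw [← Multiset.coe_countP, Multiset.sort_eq]

section OrderStatistics

variable (A : Multiset ℝ)

lemma kthLeftmost_eq_getElem {t : ℕ} (ht : t - 1 < (A.sort (· ≤ ·)).length) :
    kthLeftmost A t = (A.sort (· ≤ ·))[t - 1] :=
  List.getD_eq_getElem _ _ ht

lemma le_countP_le_kthLeftmost {t : ℕ} (ht : t ≤ A.card) :
    t ≤ A.countP (· ≤ kthLeftmost A t) := by
  rcases t.eq_zero_or_pos with rfl | hpos
  · exact Nat.zero_le _
  have hi : t - 1 < (A.sort (· ≤ ·)).length := by rw [Multiset.length_sort]; omega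
  have hcount := succ_le_countP_le_getElem (A.pairwise_sort (· ≤ ·)).sortedLE hi
  rw [countP_sort A, ← kthLeftmost_eq_getElem A hi] at hcount
  omega

lemma card_le_countP_kthLeftmost_le_add (t : ℕ) :
    A.card ≤ A.countP (kthLeftmost A t ≤ ·) + (t - 1) := by
  rcases le_or_gt A.card (t - 1) with ht | ht
  · omega
  have hi : t - 1 < (A.sort (· ≤ ·)).length := by rwa [Multiset.length_sort]
  have hcount := length_sub_le_countP_getElem_le (A.pairwise_sort (· ≤ ·)).sortedLE hi
  rw [countP_sort A (_ ≤ ·), ← kthLeftmost_eq_getElem A hi, Multiset.length_sort] at hcount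
  omega

lemma card_le_two_mul_countP_le_of_median_le {r : ℝ}
    (hr : kthLeftmost A ((A.card + 1) / 2) ≤ r) : A.card ≤ 2 * A.countP (· ≤ r) := by
  have hmedian := le_countP_le_kthLeftmost A (t := (A.card + 1) / 2) (by omega)
  have hmono := countP_le_countP_of_imp A fun z (hz : z ≤ _) => hz.trans hr
  omega

lemma card_le_two_mul_countP_ge_of_le_median {r : ℝ}
    (hr : r ≤ kthLeftmost A ((A.card + 1) / 2)) : A.card ≤ 2 * A.countP (r ≤ ·) := by
  have hmedian := card_le_countP_kthLeftmost_le_add A ((A.card + 1) / 2)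
  have hmono := countP_le_countP_of_imp A fun z (hz : _ ≤ z) => hr.trans hz
  omega

end OrderStatistics

section FarthestEndpoint

/-- The distance that the way from `z` to `c` still covers after entering `[a, b]`: from `b` on if
`z` starts at or right of `b`, from `a` on if it starts at or left of `a`, and `0` if `z` starts
strictly inside. A point `z = a = b` gets both terms, one of which is then `0`. -/
def inwardDist {𝕜 : Type*} [AddGroup 𝕜] [LinearOrder 𝕜] (a b c z : 𝕜) : 𝕜 :=
  (if b ≤ z then max b c - c else 0) + (if z ≤ a then c - min a c else 0)

lemma inwardDist_le_abs_sub {𝕜 : Type*} [AddCommGroup 𝕜] [LinearOrder 𝕜] [IsOrderedAddMonoid 𝕜]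
    (a b c z : 𝕜) : inwardDist a b c z ≤ |z - c| := by
  grind [inwardDist]

lemma max_abs_sub_add_inwardDist_le {𝕜 : Type*} [AddCommGroup 𝕜] [LinearOrder 𝕜]
    [IsOrderedAddMonoid 𝕜] {a b : 𝕜} (hab : a ≤ b) (c z : 𝕜) :
    max |z - b| |z - a| + inwardDist a b c z ≤ |z - c| + (max b c - min a c) := by
  grind [inwardDist]

variable {ι 𝕜 : Type*} [CommRing 𝕜] [LinearOrder 𝕜] {s : Finset ι} {w x : ι → 𝕜} {a b d : 𝕜}

lemma sum_mul_inwardDist (c : 𝕜) :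
    ∑ i ∈ s, w i * inwardDist a b c (x i)
      = (∑ i ∈ s with b ≤ x i, w i) * (max b c - c)
        + (∑ i ∈ s with x i ≤ a, w i) * (c - min a c) := by
  simp only [inwardDist, mul_add, sum_add_distrib, mul_ite, mul_zero, ← sum_filter, ← sum_mul]

variable [IsStrictOrderedRing 𝕜]

lemma mul_sub_le_sum_mul_inwardDist (hleft : d ≤ ∑ i ∈ s with x i ≤ a, w i)
    (hright : d ≤ ∑ i ∈ s with b ≤ x i, w i) (c : 𝕜) :
    d * (max b c - min a c) ≤ ∑ i ∈ s, w i * inwardDist a b c (x i) :=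
  calc d * (max b c - min a c) = d * (max b c - c) + d * (c - min a c) := by ring
    _ ≤ _ := add_le_add
        (mul_le_mul_of_nonneg_right hright (sub_nonneg.2 (le_max_right b c)))
        (mul_le_mul_of_nonneg_right hleft (sub_nonneg.2 (min_le_right a c)))
    _ = ∑ i ∈ s, w i * inwardDist a b c (x i) := (sum_mul_inwardDist c).symm

lemma mul_sum_max_abs_sub_le (hw : ∀ i ∈ s, 0 ≤ w i) (hab : a ≤ b) (hd : 0 ≤ d)
    (hleft : d ≤ ∑ i ∈ s with x i ≤ a, w i) (hright : d ≤ ∑ i ∈ s with b ≤ x i, w i) (c : 𝕜) :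
    d * ∑ i ∈ s, w i * max |x i - b| |x i - a|
      ≤ (∑ i ∈ s, w i) * ∑ i ∈ s, w i * |x i - c| := by
  set W := ∑ i ∈ s, w i
  set F := ∑ i ∈ s, w i * max |x i - b| |x i - a|
  set G := ∑ i ∈ s, w i * |x i - c|
  set T := ∑ i ∈ s, w i * inwardDist a b c (x i)
  set H := max b c - min a c
  have hTG : T ≤ G := sum_le_sum fun i hi =>
    mul_le_mul_of_nonneg_left (inwardDist_le_abs_sub a b c (x i)) (hw i hi)
  have hFT : F + T ≤ G + W * H := by
    simp only [F, T, G, W, sum_mul, ← sum_add_distrib, ← mul_add]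
    exact sum_le_sum fun i hi =>
      mul_le_mul_of_nonneg_left (max_abs_sub_add_inwardDist_le hab c (x i)) (hw i hi)
  have hHT : d * H ≤ T := mul_sub_le_sum_mul_inwardDist hleft hright c
  have hdW : d ≤ W := hleft.trans
    (sum_le_sum_of_subset_of_nonneg (filter_subset _ _) fun i hi _ => hw i hi)
  calc d * F ≤ d * (G - T + W * H) := mul_le_mul_of_nonneg_left (by linarith) hd
    _ = d * (G - T) + W * (d * H) := by ring
    _ ≤ W * (G - T) + W * T :=
        add_le_add (mul_le_mul_of_nonneg_right hdW (sub_nonneg.2 hTG))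
          (mul_le_mul_of_nonneg_left hHT (hd.trans hdW))
    _ = W * G := by ring

end FarthestEndpoint

section MaxCost

variable {k : ℕ}

lemma maxCost_nonneg (z : ℝ) (y : Fin k → ℝ) : 0 ≤ maxCost k z y :=
  Real.iSup_nonneg fun _ => abs_nonneg _

lemma abs_sub_le_maxCost (z : ℝ) (y : Fin k → ℝ) (ℓ : Fin k) : |z - y ℓ| ≤ maxCost k z y :=
  le_ciSup (f := fun ℓ => |z - y ℓ|) (Set.finite_range _).bddAbove ℓ

lemma maxCost_le_max_abs_sub {y : Fin k → ℝ} {a b : ℝ} (ha : ∀ ℓ, a ≤ y ℓ) (hb : ∀ ℓ, y ℓ ≤ b)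
    (z : ℝ) : maxCost k z y ≤ max |z - b| |z - a| :=
  Real.iSup_le
    (fun ℓ => abs_le_max_abs_abs (sub_le_sub_left (hb ℓ) z) (sub_le_sub_left (ha ℓ) z))
    (le_max_of_le_left (abs_nonneg _))

end MaxCost

section Setting

variable {k m : ℕ} (S : FLSetting k m) (x : Fin S.n → ℝ)

lemma groupSize_pos (j : Fin m) : 0 < groupSize S j := by
  obtain ⟨i, hi⟩ := S.surj j
  exact card_pos.2 ⟨i, by simp [hi]⟩

lemma card_groupMS (j : Fin m) : (groupMS S x j).card = groupSize S j :=
  Multiset.card_map _ _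

lemma card_repsMS (M : TwoPhase k) : (repsMS M S x).card = m := by
  simp [repsMS]

/-- The weight `1 / n_g` of an agent of group `g`, which makes the social cost a weighted sum over
the agents; each group has total weight `1`. -/
def agentWeight (i : Fin S.n) : ℝ := 1 / groupSize S (S.grp i)

lemma agentWeight_nonneg (i : Fin S.n) : 0 ≤ agentWeight S i := by
  unfold agentWeight
  positivity

lemma sum_agentWeight_mul (f : Fin S.n → ℝ) :
    ∑ i, agentWeight S i * f i = ∑ j, 1 / (groupSize S j : ℝ) * ∑ i with S.grp i = j, f i := by
  rw [← sum_fiberwise univ S.grp]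
  refine sum_congr rfl fun j _ => ?_
  rw [mul_sum]
  exact sum_congr rfl fun i hi => by rw [agentWeight, (mem_filter.1 hi).2]

lemma SC_eq_sum_agentWeight (cost : ℝ → (Fin k → ℝ) → ℝ) (y : Fin k → ℝ) :
    SC cost S x y = 1 / (m : ℝ) * ∑ i, agentWeight S i * cost (x i) y := by
  rw [SC, sum_agentWeight_mul]

lemma sum_agentWeight : ∑ i, agentWeight S i = m := by
  have hgroup : ∀ j, (groupSize S j : ℝ)⁻¹ * groupSize S j = 1 := fun j =>
    inv_mul_cancel₀ (Nat.cast_ne_zero.2 (groupSize_pos S j).ne')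
  simpa [hgroup, ← groupSize.eq_def] using sum_agentWeight_mul S 1

lemma sum_agentWeight_filter (p : ℝ → Prop) [DecidablePred p] :
    ∑ i with p (x i), agentWeight S i
      = ∑ j, ((groupMS S x j).countP p : ℝ) / groupSize S j := by
  have hcount : ∀ j, ((groupMS S x j).countP p : ℝ)
      = ∑ i with S.grp i = j, if p (x i) then 1 else 0 := fun j => by
    rw [sum_boole, groupMS, Multiset.countP_map]
    rfl
  simpa [sum_filter, hcount, div_eq_inv_mul] using
    sum_agentWeight_mul S fun i => if p (x i) then 1 else 0

lemma countP_repsMS_div_two_le_sum_agentWeight (M : TwoPhase k) (p : ℝ → Prop) [DecidablePred p]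
    (hp : ∀ j, p (M.rep m (groupMS S x j)) →
      (groupMS S x j).card ≤ 2 * (groupMS S x j).countP p) :
    ((repsMS M S x).countP p : ℝ) / 2 ≤ ∑ i with p (x i), agentWeight S i := by
  have hcount : (repsMS M S x).countP p = #{j | p (M.rep m (groupMS S x j))} :=
    Multiset.countP_map _ _ _
  rw [hcount, sum_agentWeight_filter, ← sum_boole, sum_div]
  refine sum_le_sum fun j _ => ?_
  split_ifs with hj
  · have hhalf : (groupSize S j : ℝ) ≤ 2 * (groupMS S x j).countP p := by
      exact_mod_cast card_groupMS S x j ▸ hp j hj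
    rw [div_le_div_iff₀ two_pos (Nat.cast_pos.2 (groupSize_pos S j))]
    linarith
  · rw [zero_div]
    positivity

lemma SC_maxCost_nonneg (y : Fin k → ℝ) : 0 ≤ SC (maxCost k) S x y := by
  rw [SC_eq_sum_agentWeight]
  exact mul_nonneg (by positivity)
    (sum_nonneg fun i _ => mul_nonneg (agentWeight_nonneg S i) (maxCost_nonneg _ _))

lemma mul_SC_maxCost_le [NeZero k] {y' : Fin k → ℝ} {d : ℝ} (hd : 0 ≤ d)
    (hleft : ∀ ℓ, d ≤ ∑ i with x i ≤ y' ℓ, agentWeight S i)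
    (hright : ∀ ℓ, d ≤ ∑ i with y' ℓ ≤ x i, agentWeight S i) (y : Fin k → ℝ) :
    d * SC (maxCost k) S x y' ≤ m * SC (maxCost k) S x y := by
  obtain ⟨ℓmin, hmin⟩ := Finite.exists_min y'
  obtain ⟨ℓmax, hmax⟩ := Finite.exists_max y'
  have hw : ∀ i ∈ univ, 0 ≤ agentWeight S i := fun i _ => agentWeight_nonneg S i
  rw [SC_eq_sum_agentWeight, SC_eq_sum_agentWeight, mul_left_comm, mul_left_comm (m : ℝ)]
  refine mul_le_mul_of_nonneg_left ?_ (by positivity)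
  calc d * ∑ i, agentWeight S i * maxCost k (x i) y'
      ≤ d * ∑ i, agentWeight S i * max |x i - y' ℓmax| |x i - y' ℓmin| := by
        gcongr with i hi
        exacts [hw i hi, maxCost_le_max_abs_sub hmin hmax (x i)]
    _ ≤ (∑ i, agentWeight S i) * ∑ i, agentWeight S i * |x i - y 0| :=
        mul_sum_max_abs_sub_le hw (hmin ℓmax) hd (hleft ℓmin) (hright ℓmax) (y 0)
    _ ≤ m * ∑ i, agentWeight S i * maxCost k (x i) y := by
        rw [sum_agentWeight]
        gcongr with i hi
        exacts [hw i hi, abs_sub_le_maxCost (x i) y 0]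

lemma half_le_sum_agentWeight_le_outcome (ℓ : Fin k) :
    (((m - k) / 2 + 1 : ℕ) : ℝ) / 2
      ≤ ∑ i with x i ≤ outcome (MmaxMech k) S x ℓ, agentWeight S i := by
  have hmk := S.hmk
  have hcount := le_countP_le_kthLeftmost (repsMS (MmaxMech k) S x)
    (t := (m + 1) / 2 + (ℓ + 1) - (k + 1) / 2) (by rw [card_repsMS]; omega)
  refine le_trans ?_ (countP_repsMS_div_two_le_sum_agentWeight S x (MmaxMech k) (· ≤ _)
    fun j => card_le_two_mul_countP_le_of_median_le (groupMS S x j))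
  gcongr
  exact le_trans (by omega) hcount

lemma half_le_sum_agentWeight_outcome_le (ℓ : Fin k) :
    (((m - k) / 2 + 1 : ℕ) : ℝ) / 2
      ≤ ∑ i with outcome (MmaxMech k) S x ℓ ≤ x i, agentWeight S i := by
  have hmk := S.hmk
  have hcount := card_le_countP_kthLeftmost_le_add (repsMS (MmaxMech k) S x)
    ((m + 1) / 2 + (ℓ + 1) - (k + 1) / 2)
  rw [card_repsMS] at hcount
  refine le_trans ?_ (countP_repsMS_div_two_le_sum_agentWeight S x (MmaxMech k) (_ ≤ ·)
    fun j => card_le_two_mul_countP_ge_of_le_median (groupMS S x j))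
  gcongr
  exact le_trans (by omega) (Nat.sub_le_iff_le_add.2 hcount)

end Setting

lemma le_succ_mul_half_sub_add_one {k : ℕ} (hk : 1 ≤ k) (m : ℕ) :
    m ≤ (k + 1) * ((m - k) / 2 + 1) := by
  have hmul : (m - k) / 2 ≤ k * ((m - k) / 2) := Nat.le_mul_of_pos_left _ hk
  linarith [show m ≤ k + 2 * ((m - k) / 2) + 1 by omega]

theorem stmt17_general (k : ℕ) (hk : 1 ≤ k) (m : ℕ)
    (S : FLSetting k m) (x : Fin S.n → ℝ) (y : Fin k → ℝ) :
    SC (maxCost k) S x (outcome (MmaxMech k) S x)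
      ≤ (2 * ((k : ℝ) + 1)) * SC (maxCost k) S x y := by
  have : NeZero k := ⟨by omega⟩
  set d : ℝ := (((m - k) / 2 + 1 : ℕ) : ℝ) / 2 with hd
  have hpos : 0 < d := by positivity
  have hm : (m : ℝ) ≤ d * (2 * (k + 1)) := by
    have hcast : (m : ℝ) ≤ (k + 1) * ((m - k) / 2 + 1 : ℕ) := by
      exact_mod_cast le_succ_mul_half_sub_add_one hk m
    exact hcast.trans_eq (by rw [hd]; ring)
  refine le_of_mul_le_mul_left ?_ hpos
  calc d * SC (maxCost k) S x (outcome (MmaxMech k) S x)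
      ≤ m * SC (maxCost k) S x y :=
        mul_SC_maxCost_le S x hpos.le (half_le_sum_agentWeight_le_outcome S x)
          (half_le_sum_agentWeight_outcome_le S x) y
    _ ≤ d * (2 * (k + 1)) * SC (maxCost k) S x y :=
        mul_le_mul_of_nonneg_right hm (SC_maxCost_nonneg S x y)
    _ = d * (2 * (k + 1) * SC (maxCost k) S x y) := mul_assoc _ _ _

/-- In the max-variant, for every `k ≥ 3`, the mechanism `M_k^max` has approximation
ratio at most `2(k+1)` on every instance with `m ≥ k` groups. -/
theorem stmt17 (k : ℕ) (hk : 3 ≤ k) (m : ℕ)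
    (S : FLSetting k m) (x : Fin S.n → ℝ) (y : Fin k → ℝ) (hy : Feasible S x y) :
    SC (maxCost k) S x (outcome (MmaxMech k) S x)
      ≤ (2 * ((k : ℝ) + 1)) * SC (maxCost k) S x y := by
  exact stmt17_general k (by omega) m S x y

end
end

section
/- For every k ≥ 3, the mechanisms M_k^sum and M_k^max are strategyproof, both in the sum-variant and in the max-variant. -/
open Finset

noncomputable section

/-- The mechanism `M_k^sum`: each group's representative is the position of its
`⌈n_g/2⌉`-th leftmost agent, and for each `ℓ ∈ {1,…,k}` the `ℓ`-th facility is opened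
at the `⌈ℓm/(k+1)⌉`-th leftmost representative location. -/
def MsumMech (k : ℕ) : TwoPhase k where
  rep := fun _ S => kthLeftmost S ((Multiset.card S + 1) / 2)
  sel := fun m R ℓ => kthLeftmost R ⌈(((ℓ.val + 1) * m : ℕ) : ℝ) / ((k : ℝ) + 1)⌉₊

/-! Both phases of the two mechanisms pick order statistics. For a lower set `s` of locations, the
`t`-th leftmost of a family of points lies in `s` iff at least `t` of the points do, so through both
phases a facility in `s` stays in `s` whenever no report leaves `s`. An agent to the right of a
facility at `p` does not report in `Set.Iic p`, so no misreport of hers takes a report out of this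
set, and she can only move the facility further to the left; the case of an agent to the left of `p`
is symmetric, with `Set.Iio p`. Hence no misreport brings any single facility closer to her, which
settles every cost that is monotone in the distances to the facilities. -/

theorem getElem_mem_iff_lt_countP_of_isLowerSet {α : Type*} [Preorder α] {s : Set α}
    [DecidablePred (· ∈ s)] (hs : IsLowerSet s) {l : List α} (hl : l.SortedLE) {t : ℕ}
    (ht : t < l.length) : l[t] ∈ s ↔ t < l.countP (· ∈ s) := by
  constructor
  · intro hts
    have mem_of_mem_take : ∀ a ∈ l.take (t + 1), a ∈ s := by
      intro a ha
      obtain ⟨i, hi, rfl⟩ := List.mem_take_iff_getElem.1 ha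
      exact hs (hl.getElem_le_getElem_of_le (by omega)) hts
    calc
      t < (l.take (t + 1)).length := by rw [List.length_take]; omega
      _ = (l.take (t + 1)).countP (· ∈ s) := (List.countP_eq_length.2 (by simpa)).symm
      _ ≤ l.countP (· ∈ s) := (List.take_sublist _ _).countP_le
  · contrapose!
    intro hts
    have notMem_of_mem_drop : ∀ a ∈ l.drop t, a ∉ s := by
      intro a ha has
      obtain ⟨i, hi, rfl⟩ := List.mem_drop_iff_getElem.1 ha
      exact hts (hs (hl.getElem_le_getElem_of_le (by omega)) has)
    calc
      l.countP (· ∈ s) = (l.take t).countP (· ∈ s) + (l.drop t).countP (· ∈ s) := by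
        rw [← List.countP_append, List.take_append_drop]
      _ = (l.take t).countP (· ∈ s) := by
        rw [List.countP_eq_zero (l := l.drop t).2 (by simpa), Nat.add_zero]
      _ ≤ (l.take t).length := List.countP_le_length
      _ ≤ t := List.length_take_le _ _

theorem kthLeftmost_eq_zero_of_card_le {S : Multiset ℝ} {t : ℕ} (ht : Multiset.card S ≤ t - 1) :
    kthLeftmost S t = 0 :=
  List.getD_eq_default _ _ (by rwa [Multiset.length_sort])

theorem kthLeftmost_mem_iff_lt_countP {s : Set ℝ} [DecidablePred (· ∈ s)] (hs : IsLowerSet s)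
    {S : Multiset ℝ} {t : ℕ} (ht : t - 1 < Multiset.card S) :
    kthLeftmost S t ∈ s ↔ t - 1 < S.countP (· ∈ s) := by
  have hlen : t - 1 < (S.sort (· ≤ ·)).length := by rwa [Multiset.length_sort]
  rw [kthLeftmost, List.getD_eq_getElem _ _ hlen,
    getElem_mem_iff_lt_countP_of_isLowerSet hs (Multiset.pairwise_sort S (· ≤ ·)).sortedLE,
    ← Multiset.coe_countP, Multiset.sort_eq]

theorem kthLeftmost_map_mem {ι : Type*} {S : Multiset ι} {f g : ι → ℝ} {s : Set ℝ}
    (hs : IsLowerSet s) (hfg : ∀ j, f j ∈ s → g j ∈ s) {t : ℕ}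
    (hf : kthLeftmost (S.map f) t ∈ s) : kthLeftmost (S.map g) t ∈ s := by
  classical
  rcases lt_or_ge (t - 1) (Multiset.card S) with ht | ht
  · rw [kthLeftmost_mem_iff_lt_countP hs (by rwa [Multiset.card_map])] at hf ⊢
    calc
      t - 1 < (S.map f).countP (· ∈ s) := hf
      _ ≤ (S.map g).countP (· ∈ s) := by
        rw [Multiset.countP_map, Multiset.countP_map]
        exact Multiset.card_le_card (Multiset.monotone_filter_right S hfg)
  · rw [kthLeftmost_eq_zero_of_card_le (by rwa [Multiset.card_map])] at hf ⊢
    exact hf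

/-- A two-phase mechanism both of whose phases pick order statistics. The rank `ρ` used inside a
group may depend on the numbers of groups and of group members, the rank `σ` of a facility among
the representatives on the number of groups; neither depends on the reported positions. -/
def TwoPhase.IsOrderStatistic {k : ℕ} (M : TwoPhase k) : Prop :=
  (∃ ρ : ℕ → ℕ → ℕ, ∀ m S, M.rep m S = kthLeftmost S (ρ m (Multiset.card S))) ∧
  ∃ σ : ℕ → Fin k → ℕ, ∀ m R ℓ, M.sel m R ℓ = kthLeftmost R (σ m ℓ)

/-- An individual cost that does not decrease when the agent's distance to each single facility
weakly increases, the facilities being matched by their labels. -/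
def DistanceMonotone {k : ℕ} (cost : ℝ → (Fin k → ℝ) → ℝ) : Prop :=
  ∀ ⦃a : ℝ⦄ ⦃y z : Fin k → ℝ⦄, (∀ ℓ, |a - y ℓ| ≤ |a - z ℓ|) → cost a y ≤ cost a z

theorem distanceMonotone_sumCost (k : ℕ) : DistanceMonotone (sumCost k) :=
  fun _ _ _ hyz => Finset.sum_le_sum fun ℓ _ => hyz ℓ

theorem distanceMonotone_maxCost (k : ℕ) : DistanceMonotone (maxCost k) :=
  fun _ _ _ hyz => ciSup_mono (Set.finite_range _).bddAbove hyz

namespace TwoPhase.IsOrderStatistic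

variable {k m : ℕ} {M : TwoPhase k} {S : FLSetting k m} {x : Fin S.n → ℝ} {i : Fin S.n} {ℓ : Fin k}

theorem outcome_mem (hM : M.IsOrderStatistic) {x' : Fin S.n → ℝ} {s : Set ℝ} (hs : IsLowerSet s)
    (hx : ∀ j, x j ∈ s → x' j ∈ s) (h : outcome M S x ℓ ∈ s) : outcome M S x' ℓ ∈ s := by
  obtain ⟨⟨ρ, hρ⟩, σ, hσ⟩ := hM
  have rep_mem (g : Fin m) (hg : M.rep m (groupMS S x g) ∈ s) :
      M.rep m (groupMS S x' g) ∈ s := by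
    rw [hρ, groupMS, Multiset.card_map] at hg ⊢
    exact kthLeftmost_map_mem hs hx hg
  rw [outcome, hσ] at h ⊢
  exact kthLeftmost_map_mem hs rep_mem h

theorem outcome_update_le_of_lt (hM : M.IsOrderStatistic) (h : outcome M S x ℓ < x i) (a : ℝ) :
    outcome M S (Function.update x i a) ℓ ≤ outcome M S x ℓ := by
  refine Set.mem_Iic.1 (hM.outcome_mem (isLowerSet_Iic _) (fun j hj => ?_) Set.self_mem_Iic)
  have hji : j ≠ i := by
    rintro rfl
    exact h.not_ge hj
  rwa [Function.update_of_ne hji]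

theorem le_outcome_update_of_lt (hM : M.IsOrderStatistic) (h : x i < outcome M S x ℓ) (a : ℝ) :
    outcome M S x ℓ ≤ outcome M S (Function.update x i a) ℓ := by
  by_contra! hlt
  -- A misreport that lets the facility enter `Iio` can be undone without any report leaving `Iio`.
  refine Set.self_notMem_Iio (hM.outcome_mem (isLowerSet_Iio _) (fun j hj => ?_) hlt)
  rcases eq_or_ne j i with rfl | hji
  · exact h
  · rwa [Function.update_of_ne hji] at hj

theorem abs_sub_outcome_le_update (hM : M.IsOrderStatistic) (a : ℝ) :
    |x i - outcome M S x ℓ| ≤ |x i - outcome M S (Function.update x i a) ℓ| := by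
  rcases lt_trichotomy (outcome M S x ℓ) (x i) with hlt | heq | hgt
  · exact abs_le_abs_of_nonneg (sub_nonneg.2 hlt.le)
      (sub_le_sub_left (hM.outcome_update_le_of_lt hlt a) _)
  · rw [heq, sub_self, abs_zero]
    exact abs_nonneg _
  · exact abs_le_abs_of_nonpos (sub_nonpos.2 hgt.le)
      (sub_le_sub_left (hM.le_outcome_update_of_lt hgt a) _)

theorem strategyproof (hM : M.IsOrderStatistic) {cost : ℝ → (Fin k → ℝ) → ℝ}
    (hcost : DistanceMonotone cost) : Strategyproof cost M :=
  fun _ _ _ _ a => hcost fun _ => hM.abs_sub_outcome_le_update a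

end TwoPhase.IsOrderStatistic

theorem isOrderStatistic_msumMech (k : ℕ) : (MsumMech k).IsOrderStatistic :=
  ⟨⟨fun _ n => (n + 1) / 2, fun _ _ => rfl⟩,
    fun m ℓ => ⌈(((ℓ.val + 1) * m : ℕ) : ℝ) / ((k : ℝ) + 1)⌉₊, fun _ _ _ => rfl⟩

theorem isOrderStatistic_mmaxMech (k : ℕ) : (MmaxMech k).IsOrderStatistic :=
  ⟨⟨fun _ n => (n + 1) / 2, fun _ _ => rfl⟩,
    fun m ℓ => (m + 1) / 2 + (ℓ.val + 1) - (k + 1) / 2, fun _ _ _ => rfl⟩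

theorem stmt19_general (k : ℕ) :
    Strategyproof (sumCost k) (MsumMech k) ∧ Strategyproof (maxCost k) (MsumMech k) ∧
    Strategyproof (sumCost k) (MmaxMech k) ∧ Strategyproof (maxCost k) (MmaxMech k) :=
  ⟨(isOrderStatistic_msumMech k).strategyproof (distanceMonotone_sumCost k),
    (isOrderStatistic_msumMech k).strategyproof (distanceMonotone_maxCost k),
    (isOrderStatistic_mmaxMech k).strategyproof (distanceMonotone_sumCost k),
    (isOrderStatistic_mmaxMech k).strategyproof (distanceMonotone_maxCost k)⟩

/-- For every `k ≥ 3`, the mechanisms `M_k^sum` and `M_k^max` are strategyproof in both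
the sum-variant and the max-variant. -/
theorem stmt19 (k : ℕ) (hk : 3 ≤ k) :
    Strategyproof (sumCost k) (MsumMech k) ∧ Strategyproof (maxCost k) (MsumMech k) ∧
    Strategyproof (sumCost k) (MmaxMech k) ∧ Strategyproof (maxCost k) (MmaxMech k) :=
  stmt19_general k

end
end
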